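/- arXiv:1511.05763 — 5 statements merged into one kernel-verified Lean document; each statement's English description precedes it below -/
import Mathlib

section
/- Let K be a field and define the maps φ_x, φ_y, φ_z on triples (x,y,z) of nonzero elements of K by φ_x(x,y,z) = ((xyz)^{-1}, y, z), φ_y(x,y,z) = (x, (xyz)^{-1}, z), φ_z(x,y,z) = (x, y, (xyz)^{-1}). Then (φ_x ∘ φ_y)^3 = id, (φ_x ∘ φ_z)^3 = id, and (φ_y ∘ φ_z)^3 = id. -/
/-- The transformation `φ_x(x,y,z) = ((xyz)⁻¹, y, z)` on triples of nonzero elements. -/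
def phiX {K : Type*} [Field K] : Kˣ × Kˣ × Kˣ → Kˣ × Kˣ × Kˣ :=
  fun p => ((p.1 * p.2.1 * p.2.2)⁻¹, p.2.1, p.2.2)

/-- The transformation `φ_y(x,y,z) = (x, (xyz)⁻¹, z)` on triples of nonzero elements. -/
def phiY {K : Type*} [Field K] : Kˣ × Kˣ × Kˣ → Kˣ × Kˣ × Kˣ :=
  fun p => (p.1, (p.1 * p.2.1 * p.2.2)⁻¹, p.2.2)

/-- The transformation `φ_z(x,y,z) = (x, y, (xyz)⁻¹)` on triples of nonzero elements. -/
def phiZ {K : Type*} [Field K] : Kˣ × Kˣ × Kˣ → Kˣ × Kˣ × Kˣ :=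
  fun p => (p.1, p.2.1, (p.1 * p.2.1 * p.2.2)⁻¹)

/-- The products `φ_x φ_y`, `φ_x φ_z`, `φ_y φ_z` all have order dividing 3:
`(φ_x∘φ_y)³ = (φ_x∘φ_z)³ = (φ_y∘φ_z)³ = id`. -/
theorem phi_pair_relations_length_six {K : Type*} [Field K] :
    (phiX ∘ phiY : Kˣ × Kˣ × Kˣ → Kˣ × Kˣ × Kˣ)^[3] = id ∧
    (phiX ∘ phiZ : Kˣ × Kˣ × Kˣ → Kˣ × Kˣ × Kˣ)^[3] = id ∧
    (phiY ∘ phiZ : Kˣ × Kˣ × Kˣ → Kˣ × Kˣ × Kˣ)^[3] = id := by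
  -- Put `w = (xyz)⁻¹`, so that `xyzw = 1`. Each map swaps one coordinate with `w`, so each product
  -- of two of them is a 3-cycle on `x, y, z, w`; coordinatewise the cube being the identity is an
  -- identity between Laurent monomials.
  refine ⟨?_, ?_, ?_⟩ <;> funext ⟨x, y, z⟩ <;>
    simp only [Function.iterate_succ, Function.iterate_zero, Function.comp_apply, id, phiX, phiY,
      phiZ, Prod.mk.injEq] <;>
    refine ⟨?_, ?_, ?_⟩ <;> first | trivial | (apply Units.ext; push_cast; field_simp)
end

section
/- Let K be a field and define the maps φ_x, φ_y, φ_z on triples (x,y,z) of nonzero elements of K by φ_x(x,y,z) = ((xyz)^{-1}, y, z), φ_y(x,y,z) = (x, (xyz)^{-1}, z), φ_z(x,y,z) = (x, y, (xyz)^{-1}). Then the following four length-8 relations hold as identities of maps: φ_z∘φ_y∘φ_z∘φ_x∘φ_z∘φ_y∘φ_z∘φ_x = id, φ_z∘φ_y∘φ_x∘φ_z∘φ_x∘φ_y∘φ_z∘φ_x = id, φ_z∘φ_y∘φ_z∘φ_x∘φ_y∘φ_z∘φ_y∘φ_x = id, and φ_y∘φ_x∘φ_y∘φ_z∘φ_x∘φ_y∘φ_x∘φ_z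 = id. -/
/-- `φ_x` exchanges `x` with the fourth coordinate `w` of a quadruple with product `1`. -/
theorem phiX_eq_swap {K : Type*} [Field K] (x y z w : Kˣ) (h : x * y * z * w = 1) :
    phiX (x, y, z) = (w, y, z) := by
  simp only [phiX, inv_eq_of_mul_eq_one_right h]

/-- `φ_y` exchanges `y` with the fourth coordinate `w` of a quadruple with product `1`. -/
theorem phiY_eq_swap {K : Type*} [Field K] (x y z w : Kˣ) (h : x * y * z * w = 1) :
    phiY (x, y, z) = (x, w, z) := by
  simp only [phiY, inv_eq_of_mul_eq_one_right h]

/-- `φ_z` exchanges `z` with the fourth coordinate `w` of a quadruple with product `1`. -/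
theorem phiZ_eq_swap {K : Type*} [Field K] (x y z w : Kˣ) (h : x * y * z * w = 1) :
    phiZ (x, y, z) = (x, y, w) := by
  simp only [phiZ, inv_eq_of_mul_eq_one_right h]

/-- The four length-8 relations among `φ_x`, `φ_y`, `φ_z`. -/
theorem phi_length_eight_relations {K : Type*} [Field K] :
    (phiZ ∘ phiY ∘ phiZ ∘ phiX ∘ phiZ ∘ phiY ∘ phiZ ∘ phiX :
      Kˣ × Kˣ × Kˣ → Kˣ × Kˣ × Kˣ) = id ∧
    (phiZ ∘ phiY ∘ phiX ∘ phiZ ∘ phiX ∘ phiY ∘ phiZ ∘ phiX :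
      Kˣ × Kˣ × Kˣ → Kˣ × Kˣ × Kˣ) = id ∧
    (phiZ ∘ phiY ∘ phiZ ∘ phiX ∘ phiY ∘ phiZ ∘ phiY ∘ phiX :
      Kˣ × Kˣ × Kˣ → Kˣ × Kˣ × Kˣ) = id ∧
    (phiY ∘ phiX ∘ phiY ∘ phiZ ∘ phiX ∘ phiY ∘ phiX ∘ phiZ :
      Kˣ × Kˣ × Kˣ → Kˣ × Kˣ × Kˣ) = id := by
  refine ⟨funext ?_, funext ?_, funext ?_, funext ?_⟩ <;> rintro ⟨x, y, z⟩ <;>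
    -- The fourth coordinate `w` is kept opaque, so that each map only permutes `x, y, z, w`.
    obtain ⟨w, h⟩ : ∃ w, x * y * z * w = 1 := ⟨_, mul_inv_cancel _⟩ <;>
    simp only [Function.comp_apply, id_eq]
  · rw [phiX_eq_swap x y z w h,
      phiZ_eq_swap w y z x (by rw [← h]; ac_rfl),
      phiY_eq_swap w y x z (by rw [← h]; ac_rfl),
      phiZ_eq_swap w z x y (by rw [← h]; ac_rfl),
      phiX_eq_swap w z y x (by rw [← h]; ac_rfl),
      phiZ_eq_swap x z y w (by rw [← h]; ac_rfl),
      phiY_eq_swap x z w y (by rw [← h]; ac_rfl),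
      phiZ_eq_swap x y w z (by rw [← h]; ac_rfl)]
  · rw [phiX_eq_swap x y z w h,
      phiZ_eq_swap w y z x (by rw [← h]; ac_rfl),
      phiY_eq_swap w y x z (by rw [← h]; ac_rfl),
      phiX_eq_swap w z x y (by rw [← h]; ac_rfl),
      phiZ_eq_swap y z x w (by rw [← h]; ac_rfl),
      phiX_eq_swap y z w x (by rw [← h]; ac_rfl),
      phiY_eq_swap x z w y (by rw [← h]; ac_rfl),
      phiZ_eq_swap x y w z (by rw [← h]; ac_rfl)]
  · rw [phiX_eq_swap x y z w h,
      phiY_eq_swap w y z x (by rw [← h]; ac_rfl),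
      phiZ_eq_swap w x z y (by rw [← h]; ac_rfl),
      phiY_eq_swap w x y z (by rw [← h]; ac_rfl),
      phiX_eq_swap w z y x (by rw [← h]; ac_rfl),
      phiZ_eq_swap x z y w (by rw [← h]; ac_rfl),
      phiY_eq_swap x z w y (by rw [← h]; ac_rfl),
      phiZ_eq_swap x y w z (by rw [← h]; ac_rfl)]
  · rw [phiZ_eq_swap x y z w h,
      phiX_eq_swap x y w z (by rw [← h]; ac_rfl),
      phiY_eq_swap z y w x (by rw [← h]; ac_rfl),
      phiX_eq_swap z x w y (by rw [← h]; ac_rfl),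
      phiZ_eq_swap y x w z (by rw [← h]; ac_rfl),
      phiY_eq_swap y x z w (by rw [← h]; ac_rfl),
      phiX_eq_swap y w z x (by rw [← h]; ac_rfl),
      phiY_eq_swap x w z y (by rw [← h]; ac_rfl)]
end

section
/- Let K be the field of rational functions in three variables over ℚ (the fraction field of the polynomial ring ℚ[x,y,z]), and let φ_x, φ_y, φ_z be the bijections of Kˣ × Kˣ × Kˣ given by φ_x(x,y,z) = ((xyz)^{-1}, y, z), φ_y(x,y,z) = (x, (xyz)^{-1}, z), φ_z(x,y,z) = (x, y, (xyz)^{-1}). Then the subgroup of the permutation group of Kˣ × Kˣ × Kˣ generated by φ_x, φ_y, φ_z is finite of order exactly 24. -/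
/-!
Put `w = (xyz)⁻¹`. Triples `(x, y, z)` of units correspond to quadruples `(x, y, z, w)` with product
`1`, on which the symmetric group `S₄` acts by permuting coordinates. In these terms `φ_x`, `φ_y`,
`φ_z` are the transpositions of the last coordinate with each of the other three. These star
transpositions generate `S₄` (`closure_star_swaps`), so the group in question is the image of the
action homomorphism `permHom`. The action is faithful because in characteristic zero the quadruple
`(2, 3, 5, 1/30)` has distinct entries (`permHom_injective`), so the group has order `4! = 24`.
-/

/-- The field of rational functions in three variables over ℚ. -/
abbrev RatFuncField : Type := FractionRing (MvPolynomial (Fin 3) ℚ)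

/-- The quadruple `(x, y, z, (xyz)⁻¹)` of product `1` attached to a triple of units. -/
def quad {K : Type*} [Field K] (p : Kˣ × Kˣ × Kˣ) : Fin 4 → Kˣ :=
  ![p.1, p.2.1, p.2.2, (p.1 * p.2.1 * p.2.2)⁻¹]

/-- A quadruple of product `1` is recovered from its first three entries. -/
lemma quad_of_prod_eq_one {K : Type*} [Field K] (f : Fin 4 → Kˣ) (hf : ∏ i, f i = 1) :
    quad (f 0, f 1, f 2) = f := by
  rw [Fin.prod_univ_four] at hf
  funext i
  fin_cases i
  · rfl
  · rfl
  · rfl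
  · exact inv_eq_of_mul_eq_one_right hf

lemma prod_quad {K : Type*} [Field K] (p : Kˣ × Kˣ × Kˣ) : ∏ i, quad p i = 1 := by
  rw [Fin.prod_univ_four]
  exact mul_inv_cancel _

/-- The map on triples induced by permuting the four coordinates of `quad`. The inverse
makes this a left action. -/
def permFun {K : Type*} [Field K] (σ : Equiv.Perm (Fin 4)) (p : Kˣ × Kˣ × Kˣ) :
    Kˣ × Kˣ × Kˣ :=
  (quad p (σ⁻¹ 0), quad p (σ⁻¹ 1), quad p (σ⁻¹ 2))

lemma quad_permFun {K : Type*} [Field K] (σ : Equiv.Perm (Fin 4)) (p : Kˣ × Kˣ × Kˣ) :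
    quad (permFun σ p) = fun i => quad p (σ⁻¹ i) :=
  quad_of_prod_eq_one (fun i => quad p (σ⁻¹ i))
    ((Equiv.prod_comp σ⁻¹ (quad p)).trans (prod_quad p))

lemma permFun_mul {K : Type*} [Field K] (σ τ : Equiv.Perm (Fin 4)) (p : Kˣ × Kˣ × Kˣ) :
    permFun (σ * τ) p = permFun σ (permFun τ p) := by
  conv_rhs => rw [permFun, quad_permFun]
  simp only [permFun, mul_inv_rev, Equiv.Perm.mul_apply]

lemma permFun_one {K : Type*} [Field K] (p : Kˣ × Kˣ × Kˣ) : permFun 1 p = p := rfl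

/-- The action of `S₄` on triples of units, as a homomorphism to the permutation group. -/
def permHom (K : Type*) [Field K] : Equiv.Perm (Fin 4) →* Equiv.Perm (Kˣ × Kˣ × Kˣ) where
  toFun σ :=
    { toFun := permFun σ
      invFun := permFun σ⁻¹
      left_inv := fun p => by rw [← permFun_mul, inv_mul_cancel, permFun_one]
      right_inv := fun p => by rw [← permFun_mul, mul_inv_cancel, permFun_one] }
  map_one' := Equiv.ext permFun_one
  map_mul' σ τ := Equiv.ext (permFun_mul σ τ)

lemma permHom_injective (K : Type*) [Field K] [CharZero K] :
    Function.Injective (permHom K) := by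
  have h2 : (2 : K) ≠ 0 := by norm_num
  have h3 : (3 : K) ≠ 0 := by norm_num
  have h5 : (5 : K) ≠ 0 := by norm_num
  have hq : Function.Injective (quad (Units.mk0 (2 : K) h2, Units.mk0 3 h3, Units.mk0 5 h5)) := by
    intro i j h
    have h' := congrArg Units.val h
    fin_cases i <;> fin_cases j <;> first | rfl | (exfalso; norm_num [quad] at h')
  rw [injective_iff_map_eq_one]
  intro σ hσ
  have h := congrArg quad
    (DFunLike.congr_fun hσ (Units.mk0 (2 : K) h2, Units.mk0 3 h3, Units.mk0 5 h5))
  have h' := (quad_permFun σ _).symm.trans h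
  rw [← inv_eq_one]
  exact Equiv.ext fun i => hq (congrFun h' i)

lemma closure_star_swaps :
    Subgroup.closure ({Equiv.swap 0 3, Equiv.swap 1 3, Equiv.swap 2 3} :
      Set (Equiv.Perm (Fin 4))) = ⊤ := by
  set H := Subgroup.closure ({Equiv.swap 0 3, Equiv.swap 1 3, Equiv.swap 2 3} :
      Set (Equiv.Perm (Fin 4))) with hH
  have star : ∀ i : Fin 4, Equiv.swap i 3 ∈ H := by
    intro i
    fin_cases i
    · exact Subgroup.subset_closure (by simp)
    · exact Subgroup.subset_closure (by simp)
    · exact Subgroup.subset_closure (by simp)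
    · exact (Equiv.swap_self (3 : Fin 4)) ▸ H.one_mem
  rw [eq_top_iff, ← Equiv.Perm.closure_isSwap, Subgroup.closure_le]
  rintro _ ⟨i, j, hij, rfl⟩
  by_cases hi : i = 3
  · subst hi
    rw [Equiv.swap_comm]
    exact star j
  by_cases hj : j = 3
  · subst hj
    exact star i
  -- Conjugating `(j 3)` by `(i 3)` gives `(i j)`.
  have key : ∀ i j : Fin 4, i ≠ 3 → j ≠ 3 → i ≠ j →
      Equiv.swap i 3 * Equiv.swap j 3 * Equiv.swap i 3 = Equiv.swap i j := by decide
  rw [← key i j hi hj hij]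
  exact H.mul_mem (H.mul_mem (star i) (star j)) (star i)

/-- The group generated by the three bijections `φ_x`, `φ_y`, `φ_z` of
`Kˣ × Kˣ × Kˣ`, for `K = ℚ(x,y,z)`, is finite of order exactly 24. -/
theorem phi_group_order_24
    (ex ey ez : Equiv.Perm (RatFuncFieldˣ × RatFuncFieldˣ × RatFuncFieldˣ))
    (hx : ⇑ex = phiX) (hy : ⇑ey = phiY) (hz : ⇑ez = phiZ) :
    Nat.card (Subgroup.closure ({ex, ey, ez} :
      Set (Equiv.Perm (RatFuncFieldˣ × RatFuncFieldˣ × RatFuncFieldˣ)))) = 24 := by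
  have ex' : permHom RatFuncField (Equiv.swap 0 3) = ex := DFunLike.coe_injective (hx ▸ rfl)
  have ey' : permHom RatFuncField (Equiv.swap 1 3) = ey := DFunLike.coe_injective (hy ▸ rfl)
  have ez' : permHom RatFuncField (Equiv.swap 2 3) = ez := DFunLike.coe_injective (hz ▸ rfl)
  have himg : ({ex, ey, ez} : Set _) = permHom RatFuncField ''
      {Equiv.swap 0 3, Equiv.swap 1 3, Equiv.swap 2 3} := by
    simp only [Set.image_insert_eq, Set.image_singleton, ex', ey', ez']
  have : CharZero RatFuncField :=
    charZero_of_injective_algebraMap (algebraMap ℚ RatFuncField).injective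
  rw [himg, ← MonoidHom.map_closure, closure_star_swaps,
    Subgroup.card_map_of_injective (permHom_injective _), Subgroup.card_top,
    Nat.card_eq_fintype_card, Fintype.card_perm, Fintype.card_fin]
  rfl
end

section
/- Let K be a field and define the maps φ_x, φ_y, φ_z on triples (x,y,z) of nonzero elements of K by φ_x(x,y,z) = ((xyz)^{-1}, y, z), φ_y(x,y,z) = (x, (xyz)^{-1}, z), φ_z(x,y,z) = (x, y, (xyz)^{-1}), and set ψ = φ_z ∘ φ_y ∘ φ_z. Then the Coxeter relations φ_x∘φ_x = id, φ_y∘φ_y = id, ψ∘ψ = id, (φ_x∘φ_y)^3 = id, (φ_x∘ψ)^2 = id, and (φ_y∘ψ)^3 = id all hold. -/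
/-- `ψ = φ_z ∘ φ_y ∘ φ_z`. -/
def psi {K : Type*} [Field K] : Kˣ × Kˣ × Kˣ → Kˣ × Kˣ × Kˣ :=
  phiZ ∘ phiY ∘ phiZ

/-- `ψ` is the swap of the last two coordinates. -/
theorem psi_apply {K : Type*} [Field K] (x y z : Kˣ) : psi (x, y, z) = (x, z, y) := by
  simp only [psi, phiY, phiZ, Function.comp_apply, Prod.mk.injEq, true_and]
  constructor <;> ext <;> push_cast <;> field_simp

/-- With `ψ = φ_z φ_y φ_z`, the generators `φ_x, φ_y, ψ` satisfy the Coxeter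
relations of type `A₃`. -/
theorem phi_coxeter_relations {K : Type*} [Field K] :
    (phiX ∘ phiX : Kˣ × Kˣ × Kˣ → Kˣ × Kˣ × Kˣ) = id ∧
    (phiY ∘ phiY : Kˣ × Kˣ × Kˣ → Kˣ × Kˣ × Kˣ) = id ∧
    (psi ∘ psi : Kˣ × Kˣ × Kˣ → Kˣ × Kˣ × Kˣ) = id ∧
    (phiX ∘ phiY : Kˣ × Kˣ × Kˣ → Kˣ × Kˣ × Kˣ)^[3] = id ∧
    (phiX ∘ psi : Kˣ × Kˣ × Kˣ → Kˣ × Kˣ × Kˣ)^[2] = id ∧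
    (phiY ∘ psi : Kˣ × Kˣ × Kˣ → Kˣ × Kˣ × Kˣ)^[3] = id := by
  refine ⟨?_, ?_, ?_, ?_, ?_, ?_⟩ <;> funext ⟨x, y, z⟩ <;>
    simp only [Function.iterate_succ, Function.iterate_zero, Function.comp_apply, id_eq,
      psi_apply, phiX, phiY, Prod.mk.injEq, true_and, and_true] <;>
    and_intros <;> ext <;> push_cast <;> field_simp
end

section
/- Let p, a, b be natural numbers with 0 < p ≤ 2^15, a < p, and b < p. Then (a + b) % p = min (a + b) ((a + b + (2^16 - p)) % 2^16); that is, the residue of a + b modulo p equals the minimum of a + b and the 16-bit wraparound value of a + b - p. -/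
/-- Modular addition of residues mod `p ≤ 2¹⁵` without division:
`(a + b) % p = min (a + b) ((a + b - p) mod 2¹⁶)`, where the subtraction of `p`
is performed with 16-bit wraparound. -/
theorem mod_add_via_min (p a b : ℕ) (hp : 0 < p) (hp' : p ≤ 2 ^ 15)
    (ha : a < p) (hb : b < p) :
    (a + b) % p = min (a + b) ((a + b + (2 ^ 16 - p)) % 2 ^ 16) := by
  rcases lt_or_ge (a + b) p with h | h
  -- No reduction: the wrapped difference does not overflow, and exceeds `a + b`.
  · rw [Nat.mod_eq_of_lt h]
    omega
  -- One reduction: `a + b < 2 * p`, and the wrapped difference is `a + b - p`.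
  · rw [Nat.mod_eq_sub_mod h, Nat.mod_eq_of_lt (by omega : a + b - p < p)]
    omega
end
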